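/- Assume that for every (β, s) ∈ Δ(Ω) × S the receiver's best response â(β, s) is unique, and set v̂(β, s) = ∑_ω β(ω) v(s, â(β, s), ω). Fix a prior μ0 ∈ Δ(Ω) and define V^co(μ0) = sup{z : (μ0, z) ∈ convexHull(⋃_{s∈S} v̂_s)} and V^pp(μ0) = sup{z : (μ0, z) ∈ convexHull(⋃_{s∈S} v̂_s^P)}, and assume both suprema are attained by finitely supported joint distributions on Δ(Ω) × S. Then V^pp(μ0) = V^co(μ0) if and only if there exists a finitely supported joint distribution τ on Δ(Ω) × S such that ∑_{(μ,s)} τ(μ, s) μ = μ0, ∑_{(μ,s)} τ(μ, s) v̂(μ, s) = V^co(μ0), and every (μ, s) with τ(μ, s) > 0 lies in the pooling set P (i.e., a pooling equilibrium exists at (μ, s)). -/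

import Mathlib

open scoped BigOperators

noncomputable section

/-- A pooling equilibrium exists at `(μb, sb)`. -/
def PoolingAt {Ω S A : Type*} [Fintype Ω] [Fintype S] [Fintype A]
    (v u : S → A → Ω → ℝ) (μb : Ω → ℝ) (sb : S) : Prop :=
  ∃ (β : S → Ω → ℝ) (α : S → A),
    (∀ t, β t ∈ stdSimplex ℝ Ω) ∧ β sb = μb ∧
    (∀ t a, (∑ ω, β t ω * u t a ω) ≤ (∑ ω, β t ω * u t (α t) ω)) ∧
    (∀ ω, 0 < μb ω → ∀ s', v s' (α s') ω ≤ v sb (α sb) ω)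

/-- A finitely supported distribution whose support lies over points of `G` averages to a point
of the convex hull of `G`. -/
theorem finsum_pair_mem_convexHull {Ω S : Type*} {τ f : ((Ω → ℝ) × S) → ℝ}
    {G : Set ((Ω → ℝ) × ℝ)} {m : Ω → ℝ} {z : ℝ}
    (hnonneg : ∀ x, 0 ≤ τ x) (hfin : (Function.support τ).Finite) (hone : ∑ᶠ x, τ x = 1)
    (hG : ∀ x, τ x ≠ 0 → (x.1, f x) ∈ G)
    (hm : ∀ ω, ∑ᶠ x : (Ω → ℝ) × S, τ x * x.1 ω = m ω)
    (hz : ∑ᶠ x, τ x * f x = z) :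
    (m, z) ∈ convexHull ℝ G := by
  have hsum : ∀ g : ((Ω → ℝ) × S) → ℝ, ∑ᶠ x, τ x * g x = ∑ x ∈ hfin.toFinset, τ x * g x := by
    intro g
    refine finsum_eq_sum_of_support_subset _ ?_
    rw [hfin.coe_toFinset]
    exact Function.support_mul_subset_left τ g
  have hmem : ∑ x ∈ hfin.toFinset, τ x • (x.1, f x) ∈ convexHull ℝ G := by
    refine (convex_convexHull ℝ G).sum_mem (fun x _ => hnonneg x) ?_ ?_
    · rw [← hone, finsum_eq_sum _ hfin]
    · intro x hx
      exact subset_convexHull ℝ G (hG x (by simpa using hx))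
  convert hmem using 1
  refine Prod.ext ?_ ?_
  · funext ω
    simp only [Prod.fst_sum, Prod.smul_fst, Finset.sum_apply, Pi.smul_apply, smul_eq_mul]
    rw [← hm ω, hsum]
  · simp only [Prod.snd_sum, Prod.smul_snd, smul_eq_mul]
    rw [← hz, hsum]

/-- If the second coordinate is bounded above on `G`, then so is every vertical fibre of the convex
hull of `G`. -/
theorem bddAbove_convexHull_fibre {E : Type*} [AddCommGroup E] [Module ℝ E]
    {G : Set (E × ℝ)} {M : ℝ} (hG : ∀ q ∈ G, q.2 ≤ M) (m : E) :
    BddAbove {z : ℝ | (m, z) ∈ convexHull ℝ G} := by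
  refine ⟨M, fun z hz => ?_⟩
  have hconv : Convex ℝ {q : E × ℝ | q.2 ≤ M} :=
    convex_halfSpace_le (LinearMap.snd ℝ E ℝ).isLinear M
  exact convexHull_min hG hconv hz

/-- On the simplex, an expected payoff under any response rule is at most the sum of the absolute
values of all payoffs. -/
theorem expected_payoff_le_sum_abs {Ω S A : Type*} [Fintype Ω] [Fintype S] [Fintype A]
    (v : S → A → Ω → ℝ) {μ : Ω → ℝ} (hμ : μ ∈ stdSimplex ℝ Ω) (s : S) (a : A) :
    ∑ ω, μ ω * v s a ω ≤ ∑ t, ∑ b, ∑ ω, |v t b ω| := by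
  calc ∑ ω, μ ω * v s a ω ≤ ∑ ω, |v s a ω| := by
        refine Finset.sum_le_sum fun ω _ => ?_
        have hle : μ ω ≤ 1 := hμ.2 ▸
          Finset.single_le_sum (fun i _ => hμ.1 i) (Finset.mem_univ ω)
        calc μ ω * v s a ω ≤ μ ω * |v s a ω| :=
              mul_le_mul_of_nonneg_left (le_abs_self _) (hμ.1 ω)
          _ ≤ |v s a ω| := mul_le_of_le_one_left (abs_nonneg _) hle
    _ ≤ ∑ b, ∑ ω, |v s b ω| :=
        Finset.single_le_sum (f := fun b => ∑ ω, |v s b ω|)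
          (fun b _ => Finset.sum_nonneg fun ω _ => abs_nonneg _) (Finset.mem_univ a)
    _ ≤ ∑ t, ∑ b, ∑ ω, |v t b ω| :=
        Finset.single_le_sum (f := fun t => ∑ b, ∑ ω, |v t b ω|)
          (fun t _ => Finset.sum_nonneg fun b _ => Finset.sum_nonneg fun ω _ => abs_nonneg _)
          (Finset.mem_univ s)

/-- Assume unique receiver best responses `arg`, interim payoffs
`v̂(μ, s) = ∑ ω, μ ω * v(s, arg μ s, ω)`, and that the concave envelopes `V^co` and
`V^pp` of the interim and pooling payoff graphs at the prior `μ0` are both attained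
by finitely supported joint distributions. Then `V^pp(μ0) = V^co(μ0)` iff some
finitely supported joint distribution with belief marginal `μ0` attains `V^co(μ0)`
and is supported on the pooling set. -/
theorem extended_commitment_eq_pre_persuasion_iff_pooling_support
    {Ω S A : Type*} [Fintype Ω] [Nonempty Ω] [Fintype S] [Nonempty S]
    [Fintype A] [Nonempty A]
    (v u : S → A → Ω → ℝ)
    (arg : (Ω → ℝ) → S → A)
    (harg : ∀ β ∈ stdSimplex ℝ Ω, ∀ (s : S) (a : A), a ≠ arg β s →
      (∑ ω, β ω * u s a ω) < (∑ ω, β ω * u s (arg β s) ω))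
    (vhat : (Ω → ℝ) → S → ℝ)
    (hvhat : ∀ (μ : Ω → ℝ) (s : S), vhat μ s = ∑ ω, μ ω * v s (arg μ s) ω)
    (μ0 : Ω → ℝ) (hμ0 : μ0 ∈ stdSimplex ℝ Ω)
    (Vco Vpp : ℝ)
    (hVco : Vco = sSup {z : ℝ | ((μ0, z) : (Ω → ℝ) × ℝ) ∈
      convexHull ℝ (⋃ s : S, {q : (Ω → ℝ) × ℝ | ∃ μ ∈ stdSimplex ℝ Ω, q = (μ, vhat μ s)})})
    (hVpp : Vpp = sSup {z : ℝ | ((μ0, z) : (Ω → ℝ) × ℝ) ∈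
      convexHull ℝ (⋃ s : S, {q : (Ω → ℝ) × ℝ |
        ∃ μ ∈ stdSimplex ℝ Ω, PoolingAt v u μ s ∧ q = (μ, vhat μ s)})})
    -- V^co(μ0) is attained by a finitely supported joint distribution
    (hattco : ∃ τ : ((Ω → ℝ) × S) → ℝ,
      (∀ x, 0 ≤ τ x) ∧ (Function.support τ).Finite ∧ (∑ᶠ x, τ x) = 1 ∧
      (∀ x, τ x ≠ 0 → x.1 ∈ stdSimplex ℝ Ω) ∧
      (∀ ω, ∑ᶠ x : (Ω → ℝ) × S, τ x * x.1 ω = μ0 ω) ∧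
      (∑ᶠ x : (Ω → ℝ) × S, τ x * vhat x.1 x.2) = Vco)
    -- V^pp(μ0) is attained by a finitely supported joint distribution
    (hattpp : ∃ τ : ((Ω → ℝ) × S) → ℝ,
      (∀ x, 0 ≤ τ x) ∧ (Function.support τ).Finite ∧ (∑ᶠ x, τ x) = 1 ∧
      (∀ x, τ x ≠ 0 → x.1 ∈ stdSimplex ℝ Ω ∧ PoolingAt v u x.1 x.2) ∧
      (∀ ω, ∑ᶠ x : (Ω → ℝ) × S, τ x * x.1 ω = μ0 ω) ∧
      (∑ᶠ x : (Ω → ℝ) × S, τ x * vhat x.1 x.2) = Vpp) :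
    Vpp = Vco ↔
      ∃ τ : ((Ω → ℝ) × S) → ℝ,
        (∀ x, 0 ≤ τ x) ∧ (Function.support τ).Finite ∧ (∑ᶠ x, τ x) = 1 ∧
        (∀ x, τ x ≠ 0 → x.1 ∈ stdSimplex ℝ Ω ∧ PoolingAt v u x.1 x.2) ∧
        (∀ ω, ∑ᶠ x : (Ω → ℝ) × S, τ x * x.1 ω = μ0 ω) ∧
        (∑ᶠ x : (Ω → ℝ) × S, τ x * vhat x.1 x.2) = Vco := by
  constructor
  · rintro rfl
    exact hattpp
  · rintro ⟨τ, hnonneg, hfin, hone, hsupp, hmean, hval⟩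
    have hmem := finsum_pair_mem_convexHull (f := fun x => vhat x.1 x.2)
      (G := ⋃ s : S, {q : (Ω → ℝ) × ℝ |
        ∃ μ ∈ stdSimplex ℝ Ω, PoolingAt v u μ s ∧ q = (μ, vhat μ s)}) hnonneg hfin hone
      (fun x hx => Set.mem_iUnion.2 ⟨x.2, x.1, (hsupp x hx).1, (hsupp x hx).2, rfl⟩) hmean hval
    have hbdd := bddAbove_convexHull_fibre
      (G := ⋃ s : S, {q : (Ω → ℝ) × ℝ | ∃ μ ∈ stdSimplex ℝ Ω, q = (μ, vhat μ s)})
      (M := ∑ t, ∑ b, ∑ ω, |v t b ω|) (by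
        intro q hq
        obtain ⟨s, μ, hμ, rfl⟩ := Set.mem_iUnion.1 hq
        simpa only [hvhat] using expected_payoff_le_sum_abs v hμ s (arg μ s)) μ0
    have hsub : {z : ℝ | ((μ0, z) : (Ω → ℝ) × ℝ) ∈
          convexHull ℝ (⋃ s : S, {q : (Ω → ℝ) × ℝ |
            ∃ μ ∈ stdSimplex ℝ Ω, PoolingAt v u μ s ∧ q = (μ, vhat μ s)})} ⊆
        {z : ℝ | ((μ0, z) : (Ω → ℝ) × ℝ) ∈
          convexHull ℝ (⋃ s : S, {q : (Ω → ℝ) × ℝ |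
            ∃ μ ∈ stdSimplex ℝ Ω, q = (μ, vhat μ s)})} := by
      refine fun z hz => convexHull_mono (Set.iUnion_mono fun s => ?_) hz
      rintro q ⟨μ, hμ, -, hq⟩
      exact ⟨μ, hμ, hq⟩
    apply le_antisymm
    · rw [hVpp, hVco]
      exact csSup_le_csSup hbdd ⟨Vco, hmem⟩ hsub
    · rw [hVpp]
      exact le_csSup (hbdd.mono hsub) hmem
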